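/- For all natural numbers n ≥ 1 and real numbers p, q with 0 < p ≤ n and 0 < q ≤ n, one has ∫_0^1 x^(p−1) / (1−x^n)^((n−q)/n) dx = ∫_0^1 x^(q−1) / (1−x^n)^((n−p)/n) dx; that is, Euler's symbol satisfies the symmetry (p/q) = (q/p). -/

import Mathlib

/-!
Writing the integrand as `x ^ (n - 1) * ((x ^ n) ^ (p / n - 1) * (1 - x ^ n) ^ (q / n - 1))`, the
substitution `t = x ^ n` turns Euler's symbol `(p/q)` into the Beta integral `B(p/n, q/n) / n`,
and the Beta function is symmetric.
-/

open MeasureTheory Set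

theorem integral_comp_rpow_of_pos {E : Type*} [NormedAddCommGroup E] [NormedSpace ℝ E]
    (g : ℝ → E) {r b : ℝ} (hr : 0 < r) (hb : 0 ≤ b) :
    ∫ x in (0 : ℝ)..b, (r * x ^ (r - 1)) • g (x ^ r) = ∫ y in (0 : ℝ)..b ^ r, g y := by
  have indicator_comp : ∀ x ∈ Ioi (0 : ℝ),
      (r * x ^ (r - 1)) • (Iic (b ^ r)).indicator g (x ^ r) =
        (Iic b).indicator (fun x ↦ (r * x ^ (r - 1)) • g (x ^ r)) x := fun x hx ↦ by
    simp only [indicator_apply, mem_Iic, Real.rpow_le_rpow_iff (le_of_lt hx) hb hr, smul_ite,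
      smul_zero]
  have substitution := integral_comp_rpow_Ioi_of_pos (g := (Iic (b ^ r)).indicator g) hr
  rwa [setIntegral_congr_fun measurableSet_Ioi indicator_comp,
    setIntegral_indicator measurableSet_Iic, setIntegral_indicator measurableSet_Iic,
    Ioi_inter_Iic, Ioi_inter_Iic, ← intervalIntegral.integral_of_le hb,
    ← intervalIntegral.integral_of_le (Real.rpow_nonneg hb r)] at substitution

theorem beta_comm (a b : ℝ) : ProbabilityTheory.beta a b = ProbabilityTheory.beta b a := by
  rw [ProbabilityTheory.beta, ProbabilityTheory.beta, mul_comm, add_comm]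

theorem betaIntegral_ofReal (a b : ℝ) :
    Complex.betaIntegral a b =
      ((∫ t in (0 : ℝ)..1, t ^ (a - 1) * (1 - t) ^ (b - 1) : ℝ) : ℂ) := by
  rw [Complex.betaIntegral, ← intervalIntegral.integral_ofReal]
  refine intervalIntegral.integral_congr_Ioo_of_le zero_le_one fun t ht ↦ ?_
  push_cast [Complex.ofReal_cpow ht.1.le, Complex.ofReal_cpow (sub_nonneg.mpr ht.2.le)]
  rfl

theorem integral_rpow_mul_one_sub_rpow {a b : ℝ} (ha : 0 < a) (hb : 0 < b) :
    ∫ t in (0 : ℝ)..1, t ^ (a - 1) * (1 - t) ^ (b - 1) = ProbabilityTheory.beta a b := by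
  rw [ProbabilityTheory.beta_eq_betaIntegralReal a b ha hb, betaIntegral_ofReal,
    Complex.ofReal_re]

/-- Euler's symbol `(p/q)`, whose fixed natural number `n` becomes a real parameter here.
The integral converges for positive `n`, `p`, `q`. -/
noncomputable def eulerSymbol (n p q : ℝ) : ℝ :=
  ∫ x in (0 : ℝ)..1, x ^ (p - 1) / (1 - x ^ n) ^ ((n - q) / n)

theorem eulerSymbol_integrand_eq {n x : ℝ} (hn : n ≠ 0) (hx : 0 < x) (hxn : x ^ n ≤ 1)
    (p q : ℝ) :
    x ^ (p - 1) / (1 - x ^ n) ^ ((n - q) / n) =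
      x ^ (n - 1) * ((x ^ n) ^ (p / n - 1) * (1 - x ^ n) ^ (q / n - 1)) := by
  have exponent_left : p - 1 = (n - 1) + n * (p / n - 1) := by field_simp; ring
  have exponent_right : (n - q) / n = -(q / n - 1) := by field_simp; ring
  rw [exponent_left, exponent_right, Real.rpow_add hx, Real.rpow_mul hx.le,
    Real.rpow_neg (sub_nonneg.mpr hxn), div_inv_eq_mul, mul_assoc]

theorem eulerSymbol_eq_beta {n p q : ℝ} (hn : 0 < n) (hp : 0 < p) (hq : 0 < q) :
    eulerSymbol n p q = n⁻¹ * ProbabilityTheory.beta (p / n) (q / n) := by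
  let g : ℝ → ℝ := fun t ↦ t ^ (p / n - 1) * (1 - t) ^ (q / n - 1)
  calc
    eulerSymbol n p q = ∫ x in (0 : ℝ)..1, n⁻¹ * ((n * x ^ (n - 1)) • g (x ^ n)) := by
      refine intervalIntegral.integral_congr_Ioo_of_le zero_le_one fun x hx ↦ ?_
      have hxn : x ^ n ≤ 1 := Real.rpow_le_one hx.1.le hx.2.le hn.le
      rw [eulerSymbol_integrand_eq hn.ne' hx.1 hxn, smul_eq_mul, mul_assoc n,
        inv_mul_cancel_left₀ hn.ne']
    _ = n⁻¹ * ∫ t in (0 : ℝ)..1, g t := by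
      rw [intervalIntegral.integral_const_mul, integral_comp_rpow_of_pos g hn zero_le_one,
        Real.one_rpow]
    _ = n⁻¹ * ProbabilityTheory.beta (p / n) (q / n) := by
      rw [integral_rpow_mul_one_sub_rpow (div_pos hp hn) (div_pos hq hn)]

theorem euler_symbol_symm_general {n p q : ℝ} (hn : 0 < n) (hp : 0 < p) (hq : 0 < q) :
    eulerSymbol n p q = eulerSymbol n q p := by
  rw [eulerSymbol_eq_beta hn hp hq, eulerSymbol_eq_beta hn hq hp, beta_comm]

/-- Symmetry of Euler's symbol: for `n ≥ 1` and `0 < p ≤ n`, `0 < q ≤ n`,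
`∫_0^1 x^(p-1)/(1-x^n)^((n-q)/n) dx = ∫_0^1 x^(q-1)/(1-x^n)^((n-p)/n) dx`. -/
theorem euler_symbol_symm (n : ℕ) (hn : 1 ≤ n) (p q : ℝ) (hp : 0 < p) (hpn : p ≤ n)
    (hq : 0 < q) (hqn : q ≤ n) :
    (∫ x in (0:ℝ)..1, x ^ (p - 1) / (1 - x ^ n) ^ (((n : ℝ) - q) / n)) =
      ∫ x in (0:ℝ)..1, x ^ (q - 1) / (1 - x ^ n) ^ (((n : ℝ) - p) / n) := by
  simpa only [eulerSymbol, Real.rpow_natCast] using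
    euler_symbol_symm_general (Nat.cast_pos.mpr hn) hp hq
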